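/- If α ∈ (0,1) is a 0'-right-c.e. real and c ∈ ℕ satisfies α + 2^{-c} < 1, then there exist an oracle machine M and a binary string ρ of length c such that M(σ,n) is undefined for every n and every string σ compatible with ρ, and μ(TOT(M)) = μ(INF(M)) = α. -/

import Mathlib

open scoped Classical
open MeasureTheory

namespace RandProb

/-- Cantor space: the space of infinite binary sequences. -/
abbrev Cantor := ℕ → Bool

/-! ### Oracle partial recursive functions, via codes -/

/-- Codes for partial recursive functions with access to an oracle `O : ℕ → ℕ`.
These codes play the role of (oracle) Turing machines. -/
inductive CodeO : Type
  | zero : CodeO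
  | succ : CodeO
  | left : CodeO
  | right : CodeO
  | oracle : CodeO
  | pair : CodeO → CodeO → CodeO
  | comp : CodeO → CodeO → CodeO
  | prec : CodeO → CodeO → CodeO
  | rfind' : CodeO → CodeO

/-- Evaluation of an oracle code with (total) oracle `O`. -/
def CodeO.eval (O : ℕ → ℕ) : CodeO → ℕ →. ℕ
  | .zero => pure 0
  | .succ => Nat.succ
  | .left => ↑fun n : ℕ => n.unpair.1
  | .right => ↑fun n : ℕ => n.unpair.2
  | .oracle => ↑fun n : ℕ => O n
  | .pair cf cg => fun n => Nat.pair <$> cf.eval O n <*> cg.eval O n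
  | .comp cf cg => fun n => cg.eval O n >>= cf.eval O
  | .prec cf cg =>
    Nat.unpaired fun a n =>
      n.rec (cf.eval O a) fun y IH => do
        let i ← IH
        cg.eval O (Nat.pair a (Nat.pair y i))
  | .rfind' cf =>
    Nat.unpaired fun a m =>
      (Nat.rfind fun n => (fun m => m = 0) <$> cf.eval O (Nat.pair a (n + m))).map (· + m)

/-- A canonical injective numbering of oracle codes. -/
def CodeO.encode : CodeO → ℕ
  | .zero => 0
  | .succ => 1
  | .left => 2
  | .right => 3
  | .oracle => 4
  | .pair cf cg => 2 * (2 * Nat.pair cf.encode cg.encode) + 5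
  | .comp cf cg => 2 * (2 * Nat.pair cf.encode cg.encode + 1) + 5
  | .prec cf cg => 2 * (2 * Nat.pair cf.encode cg.encode) + 6
  | .rfind' cf => 2 * (2 * cf.encode + 1) + 6

/-- The Turing jump of an oracle: the halting problem relative to `O`,
as a `{0,1}`-valued function. -/
noncomputable def jump (O : ℕ → ℕ) : ℕ → ℕ := fun e =>
  if ∃ c : CodeO, c.encode = e ∧ (c.eval O e).Dom then 1 else 0

/-- `iterJump n` is `∅^(n)`, the `n`-th iterate of the halting problem (as an oracle). -/
noncomputable def iterJump : ℕ → ℕ → ℕ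
  | 0 => fun _ => 0
  | n + 1 => jump (iterJump n)

/-- `S ⊆ ℕ` is computably enumerable relative to the oracle `O`. -/
def CeIn (O : ℕ → ℕ) (S : Set ℕ) : Prop := ∃ c : CodeO, S = {m | (c.eval O m).Dom}

/-- The left Dedekind cut of `α` (as a set of codes of rationals) is c.e. in `O`. -/
def LeftCeIn (O : ℕ → ℕ) (α : ℝ) : Prop :=
  CeIn O {m | ∃ q : ℚ, Encodable.encode q = m ∧ (q : ℝ) < α}

/-- The right Dedekind cut of `α` (as a set of codes of rationals) is c.e. in `O`. -/
def RightCeIn (O : ℕ → ℕ) (α : ℝ) : Prop :=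
  CeIn O {m | ∃ q : ℚ, Encodable.encode q = m ∧ α < (q : ℝ)}

/-! ### Martin-Löf randomness for real numbers -/

/-- The `i`-th component of a Martin-Löf test coded by the set `W ⊆ ℕ`:
the union of all open rational intervals whose codes are enumerated into the
`i`-th section of `W`. -/
def testSet (W : Set ℕ) (i : ℕ) : Set ℝ :=
  {x | ∃ p q : ℚ, Nat.pair i (Encodable.encode (p, q)) ∈ W ∧ (p : ℝ) < x ∧ x < (q : ℝ)}

/-- `α` is Martin-Löf random relative to the oracle `O`. -/
def MLRandomIn (O : ℕ → ℕ) (α : ℝ) : Prop :=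
  ∀ W : Set ℕ, CeIn O W →
    (∀ i, volume (testSet W i) ≤ ENNReal.ofReal ((2 : ℝ)⁻¹ ^ i)) →
    ∃ i, α ∉ testSet W i

/-- `α` is `n`-random: Martin-Löf random relative to `∅^(n-1)`. -/
def NRandom (n : ℕ) (α : ℝ) : Prop := MLRandomIn (iterJump (n - 1)) α

/-! ### The uniform measure on Cantor space -/

/-- The binary digits of a real number (meaningful on `[0,1)`). -/
noncomputable def digits (x : ℝ) : Cantor := fun n => decide (⌊x * 2 ^ (n + 1)⌋ % 2 = 1)

/-- The uniform (Lebesgue) product measure on Cantor space, obtained as the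
pushforward of Lebesgue measure on `[0,1)` under the binary-digit map. -/
noncomputable def mu : Measure Cantor :=
  Measure.map digits (volume.restrict (Set.Ico (0 : ℝ) 1))

/-- The uniform measure of a set of elements of Cantor space, as a real number. -/
noncomputable def muR (S : Set Cantor) : ℝ := (mu S).toReal

/-! ### Strings, prefixes and cylinders -/

/-- The length-`n` initial segment of `X ∈ 2^ω`, as a finite binary string. -/
def initSeg (X : Cantor) (n : ℕ) : List Bool := (List.range n).map X

/-- `⟦S⟧`: the elements of Cantor space having a prefix in the set of strings `S`. -/
def cyl (S : Set (List Bool)) : Set Cantor := {X | ∃ n, initSeg X n ∈ S}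

/-- A set of strings is prefix-free if none of its elements properly extends another. -/
def IsPrefixFree (S : Set (List Bool)) : Prop := ∀ σ ∈ S, ∀ τ ∈ S, σ <+: τ → σ = τ

/-- A set of strings is upward closed if it is closed under taking extensions. -/
def UpClosed (S : Set (List Bool)) : Prop := ∀ σ ∈ S, ∀ τ, σ <+: τ → τ ∈ S

/-- Two strings are compatible if one is a prefix of the other. -/
def Compatible (σ τ : List Bool) : Prop := σ <+: τ ∨ τ <+: σ

/-! ### Oracle machines -/

/-- An element of Cantor space viewed as a `{0,1}`-valued oracle. -/
def oX (X : Cantor) : ℕ → ℕ := fun n => cond (X n) 1 0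

/-- `evalO X c n`: the (possibly divergent) output of the oracle machine `c`
on input `n` with oracle `X`. -/
def evalO (X : Cantor) (c : CodeO) (n : ℕ) : Part ℕ := c.eval (oX X) n

/-- The oracle obtained by writing the string `ρ` before the bits of `X`. -/
def prepend (ρ : List Bool) (X : Cantor) : Cantor := fun n =>
  if n < ρ.length then ρ.getD n false else X (n - ρ.length)

/-- `X ∈ 2^ω` extends the finite string `ρ`. -/
def Extends (X : Cantor) (ρ : List Bool) : Prop := initSeg X ρ.length = ρ

/-- `u` is a universal oracle machine: some effective, prefix-free translation
`c ↦ σ_c` satisfies `u(σ_c * X, n) ≃ c(X, n)` for all machines `c`. -/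
def UniversalOM (u : CodeO) : Prop :=
  ∃ σ : CodeO → List Bool,
    (∃ f : ℕ → ℕ, Computable f ∧ ∀ c : CodeO, f c.encode = Encodable.encode (σ c)) ∧
    IsPrefixFree (Set.range σ) ∧
    ∀ (c : CodeO) (X : Cantor) (n : ℕ), evalO (prepend (σ c) X) u n = evalO X c n

/-- `TOT(c)`: the oracles `X` such that the function `c(X)` is total. -/
def TOT (c : CodeO) : Set Cantor := {X | ∀ n, (evalO X c n).Dom}

/-- The domain of the partial function `c(X)`. -/
def domSet (c : CodeO) (X : Cantor) : Set ℕ := {n | (evalO X c n).Dom}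

/-- The range of the partial function `c(X)`. -/
def ranSet (c : CodeO) (X : Cantor) : Set ℕ := {v | ∃ n, v ∈ evalO X c n}

/-- `INF(c)`: the oracles `X` such that `c(X)` has infinite domain. -/
def INF (c : CodeO) : Set Cantor := {X | (domSet c X).Infinite}

/-- `COF(c)`: the oracles `X` such that `c(X)` has cofinite domain. -/
def COF (c : CodeO) : Set Cantor := {X | (domSet c X)ᶜ.Finite}

/-- `COM(c)`: the oracles `X` such that `c(X)` has computable domain. -/
def COM (c : CodeO) : Set Cantor := {X | ComputablePred fun n => n ∈ domSet c X}

/-- The characteristic function of a set of naturals. -/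
noncomputable def chi (A : Set ℕ) : ℕ → ℕ := fun n => if n ∈ A then 1 else 0

/-- Turing reducibility between sets of naturals. -/
def TuringLEs (B A : Set ℕ) : Prop := ∃ c : CodeO, ∀ n, c.eval (chi A) n = Part.some (chi B n)

/-- The halting problem `∅'` as a set of naturals. -/
noncomputable def HaltingSet : Set ℕ := {e | iterJump 1 e = 1}

/-- `COMPL(c)`: the oracles `X` such that the domain of `c(X)` computes the halting problem. -/
noncomputable def COMPL (c : CodeO) : Set Cantor := {X | TuringLEs HaltingSet (domSet c X)}

/-- Turing reducibility between total functions on ℕ. -/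
def TuringLEf (f g : ℕ → ℕ) : Prop := ∃ c : CodeO, ∀ n, c.eval g n = Part.some (f n)

/-- A real number viewed as an oracle, via its binary expansion. -/
noncomputable def realOracle (α : ℝ) : ℕ → ℕ := oX (digits α)

/-- Two reals have Turing-incomparable degrees. -/
noncomputable def TIncompReal (α β : ℝ) : Prop :=
  ¬ TuringLEf (realOracle α) (realOracle β) ∧ ¬ TuringLEf (realOracle β) (realOracle α)

/-! ### Arithmetical hierarchy -/

/-- Evaluation with the trivial (empty) oracle: ordinary partial recursion. -/
def eval0 (c : CodeO) : ℕ →. ℕ := c.eval fun _ => 0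

/-- `SigmaNumIdx n c` is the `Σ^0_{n+1}` subset of `ℕ` with index `c`. -/
def SigmaNumIdx : ℕ → CodeO → Set ℕ
  | 0, c => {m | (eval0 c m).Dom}
  | n + 1, c => {m | ∃ k, Nat.pair m k ∉ SigmaNumIdx n c}

/-- `S ⊆ ℕ` is `Σ^0_n` (intended for `n ≥ 1`). -/
def SigmaN (n : ℕ) (S : Set ℕ) : Prop := ∃ c : CodeO, S = SigmaNumIdx (n - 1) c

/-- The set of codes of the elements of a set of binary strings. -/
def strCodes (S : Set (List Bool)) : Set ℕ := {m | ∃ σ ∈ S, Encodable.encode σ = m}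

/-- A set of binary strings is `Σ^0_n`. -/
def SigmaStr (n : ℕ) (S : Set (List Bool)) : Prop := SigmaN n (strCodes S)

/-- A set of binary strings is `Π^0_n`: its complement is `Σ^0_n`. -/
def PiStr (n : ℕ) (S : Set (List Bool)) : Prop := SigmaStr n Sᶜ

/-- A set of binary strings is c.e. relative to the oracle `O`. -/
def CeStrIn (O : ℕ → ℕ) (S : Set (List Bool)) : Prop := CeIn O (strCodes S)

/-- `SigmaClassIdx n c m` is the `Σ^0_{n+1}` class of elements of Cantor space
with index `c` and parameter `m`. -/
def SigmaClassIdx : ℕ → CodeO → ℕ → Set Cantor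
  | 0, c, m => {X | (evalO X c m).Dom}
  | n + 1, c, m => {X | ∃ k, X ∉ SigmaClassIdx n c (Nat.pair m k)}

/-! ### Monotone machines -/

/-- A monotone machine: a partial computable, monotone map on finite binary strings. -/
structure MonoMachine where
  f : List Bool →. List Bool
  partrec : Partrec f
  mono : ∀ ⦃σ τ a b : List Bool⦄, σ <+: τ → a ∈ f σ → b ∈ f τ → a <+: b

/-- The oracles `X` such that the output of the monotone machine on `X` is infinite. -/
def MonoINF (M : MonoMachine) : Set Cantor :=
  {X | ∀ k, ∃ n a, a ∈ M.f (initSeg X n) ∧ k ≤ a.length}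

/-- The `k`-th bit of the output `M(X)` of a monotone machine is `b`. -/
def MonoMachine.hasBit (M : MonoMachine) (X : Cantor) (k : ℕ) (b : Bool) : Prop :=
  ∃ n a, a ∈ M.f (initSeg X n) ∧ a[k]? = some b

/-- `U` is a universal monotone machine. -/
def UniversalMono (U : MonoMachine) : Prop :=
  ∃ (M : ℕ → MonoMachine) (σ : ℕ → List Bool),
    Partrec₂ (fun (e : ℕ) (τ : List Bool) => (M e).f τ) ∧
    (∀ V : MonoMachine, ∃ e, (M e).f = V.f) ∧
    Computable σ ∧ IsPrefixFree (Set.range σ) ∧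
    ∀ e τ, U.f (σ e ++ τ) = (M e).f τ

/-! ### Infinitary self-delimiting machines -/

/-- Chaitin's infinitary self-delimiting machines: `f σ n` is the `n`-th approximation
of the output on program `σ` (`none` meaning divergence); the convergence relation is
decidable, approximations are monotone, and machines are self-delimiting. -/
structure InfMachine where
  f : List Bool → ℕ → Option (List Bool)
  computable : Computable₂ f
  mono : ∀ σ m n a, n < m → f σ m = some a → ∃ b, f σ n = some b ∧ b <+: a
  sd : ∀ σ τ n a, f σ n = some a → f (σ ++ τ) n = some a

/-- `M^∞(σ)↓`: all approximations converge. -/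
def InfMachine.domInf (M : InfMachine) (σ : List Bool) : Prop := ∀ n, M.f σ n ≠ none

/-- The domain of `M^∞`. -/
def InfMachine.DOM (M : InfMachine) : Set (List Bool) := {σ | M.domInf σ}

/-- The output `M^∞(σ)` is infinite (a stream). -/
def InfMachine.outInf (M : InfMachine) (σ : List Bool) : Prop :=
  ∀ k, ∃ n a, M.f σ n = some a ∧ k ≤ a.length

/-- `FIN(M^∞)`: programs in the domain with finite output. -/
def InfMachine.FIN (M : InfMachine) : Set (List Bool) := {σ | M.domInf σ ∧ ¬ M.outInf σ}

/-- `INF(M^∞)`: programs in the domain with infinite output. -/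
def InfMachine.INF (M : InfMachine) : Set (List Bool) := {σ | M.domInf σ ∧ M.outInf σ}

/-- The `k`-th bit of the output `M^∞(σ)` is `b`. -/
def InfMachine.hasBit (M : InfMachine) (σ : List Bool) (k : ℕ) (b : Bool) : Prop :=
  ∃ n a, M.f σ n = some a ∧ a[k]? = some b

/-- The domain of the prefix-free machine `M^*`: minimal strings in the domain of `M^∞`. -/
def InfMachine.DOMstar (M : InfMachine) : Set (List Bool) :=
  {σ | M.domInf σ ∧ ∀ τ, τ <+: σ → τ ≠ σ → ¬ M.domInf τ}

/-- Programs whose output is a stream with a tail of 1s. -/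
def InfMachine.COFout (M : InfMachine) : Set (List Bool) :=
  {σ | M.domInf σ ∧ M.outInf σ ∧ ∃ t, ∀ k, t ≤ k → M.hasBit σ k true}

/-- `A^∞(σ) ≃ B^∞(τ)`: both converge or both diverge, with equal outputs. -/
def InfAgree (A : InfMachine) (σ : List Bool) (B : InfMachine) (τ : List Bool) : Prop :=
  (A.domInf σ ↔ B.domInf τ) ∧ (A.domInf σ → ∀ k b, (A.hasBit σ k b ↔ B.hasBit τ k b))

/-- `U` is a universal infinitary self-delimiting machine. -/
def UniversalInf (U : InfMachine) : Prop :=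
  ∃ (M : ℕ → InfMachine) (σ : ℕ → List Bool),
    Computable (fun p : ℕ × List Bool × ℕ => (M p.1).f p.2.1 p.2.2) ∧
    (∀ V : InfMachine, ∃ e, ∀ τ, InfAgree (M e) τ V τ) ∧
    Computable σ ∧ IsPrefixFree (Set.range σ) ∧
    ∀ e τ, InfAgree U (σ e ++ τ) (M e) τ

end RandProb

/-!
The set of strings `σ` with `α < 0.σ` is c.e. in `∅'`, hence of the form `∃ s, ∀ t, R (σ, s, t)`
with `R` primitive recursive. Let `M(X, n)` halt once it has found, for each of the first `n + N`
pairs `(k, s)`, some `t` refuting `R (X ↾ k, s, t)`. The domain of `M(X)` is an initial segment of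
`ℕ`, so `INF(M) = TOT(M)`, and this class consists of the `X` no prefix of which exceeds `α`; under
the binary-digit map it becomes the interval `[0, α]`. The string `ρ = 1^c` satisfies
`0.ρ = 1 - 2^{-c} > α`, so some `s` witnesses `∀ t, R (ρ, s, t)`, and taking `N` larger than the
code of the pair `(c, s)` makes `M` diverge everywhere on every extension of `ρ`.
-/

namespace RandProb

open Nat.Partrec (Code)

section Primrec

variable {α β : Type*} [Primcodable α] [Primcodable β]

theorem primrec_natPair {f g : α → ℕ} (hf : Primrec f) (hg : Primrec g) :
    Primrec fun a => Nat.pair (f a) (g a) :=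
  Primrec₂.natPair.comp hf hg

theorem primrec_natAdd {f g : α → ℕ} (hf : Primrec f) (hg : Primrec g) :
    Primrec fun a => f a + g a :=
  Primrec.nat_add.comp hf hg

theorem primrec_natSub {f g : α → ℕ} (hf : Primrec f) (hg : Primrec g) :
    Primrec fun a => f a - g a :=
  Primrec.nat_sub.comp hf hg

theorem primrec_natMul {f g : α → ℕ} (hf : Primrec f) (hg : Primrec g) :
    Primrec fun a => f a * g a :=
  Primrec.nat_mul.comp hf hg

theorem primrec_natDiv {f g : α → ℕ} (hf : Primrec f) (hg : Primrec g) :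
    Primrec fun a => f a / g a :=
  Primrec.nat_div.comp hf hg

theorem primrec_natMod {f g : α → ℕ} (hf : Primrec f) (hg : Primrec g) :
    Primrec fun a => f a % g a :=
  Primrec.nat_mod.comp hf hg

theorem primrec_natPow {f g : α → ℕ} (hf : Primrec f) (hg : Primrec g) :
    Primrec fun a => f a ^ g a :=
  (Primrec₂.unpaired'.1 Nat.Primrec.pow).comp hf hg

theorem primrec_optionGetD {f : α → Option β} {d : α → β} (hf : Primrec f) (hd : Primrec d) :
    Primrec fun a => (f a).getD (d a) :=
  Primrec.option_getD.comp hf hd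

theorem primrec_listGetD {f : α → List β} {g : α → ℕ} {d : α → β} (hf : Primrec f)
    (hg : Primrec g) (hd : Primrec d) : Primrec fun a => (f a).getD (g a) (d a) :=
  primrec_optionGetD (Primrec.list_getElem?.comp hf hg) hd

theorem primrec_listCons {f : α → β} {g : α → List β} (hf : Primrec f) (hg : Primrec g) :
    Primrec fun a => f a :: g a :=
  Primrec.list_cons.comp hf hg

theorem primrec_listTake {f : α → ℕ} {g : α → List β} (hf : Primrec f) (hg : Primrec g) :
    Primrec fun a => (g a).take (f a) :=
  Primrec.list_take.comp hf hg

theorem primrec_codePair {f g : α → Code} (hf : Primrec f) (hg : Primrec g) :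
    Primrec fun a => Code.pair (f a) (g a) :=
  Code.primrec₂_pair.comp hf hg

theorem primrec_codeComp {f g : α → Code} (hf : Primrec f) (hg : Primrec g) :
    Primrec fun a => Code.comp (f a) (g a) :=
  Code.primrec₂_comp.comp hf hg

theorem primrec_codePrec {f g : α → Code} (hf : Primrec f) (hg : Primrec g) :
    Primrec fun a => Code.prec (f a) (g a) :=
  Code.primrec₂_prec.comp hf hg

theorem primrecPred_eq {f g : α → β} (hf : Primrec f) (hg : Primrec g) :
    PrimrecPred fun a => f a = g a :=
  Primrec.eq.comp hf hg

theorem primrecPred_forall_lt {R : α × ℕ → Prop} (hR : PrimrecPred R) {f : α → ℕ}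
    (hf : Primrec f) : PrimrecPred fun a => ∀ i < f a, R (a, i) := by
  have hR' : PrimrecRel fun (i : ℕ) a => R (a, i) := hR.comp (Primrec.pair .snd .fst)
  exact (hR'.forall_mem_list.comp (Primrec.list_range.comp hf) .id).of_eq fun a => by
    simp only [List.mem_range, id]

theorem primrecPred_exists_lt {R : α × ℕ → Prop} (hR : PrimrecPred R) {f : α → ℕ}
    (hf : Primrec f) : PrimrecPred fun a => ∃ i < f a, R (a, i) := by
  have hR' : PrimrecRel fun (i : ℕ) a => R (a, i) := hR.comp (Primrec.pair .snd .fst)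
  exact (hR'.exists_mem_list.comp (Primrec.list_range.comp hf) .id).of_eq fun a => by
    simp only [List.mem_range, id]

end Primrec

attribute [local fun_prop] Primrec
attribute [local fun_prop] Primrec.id Primrec.const Primrec.comp Primrec.fst Primrec.snd
  Primrec.pair Primrec.unpair Primrec.decode Primrec.list_length primrec_natPair primrec_natAdd
  primrec_natSub primrec_natMul primrec_natDiv primrec_natMod primrec_natPow primrec_optionGetD
  primrec_listGetD primrec_listCons primrec_listTake primrec_codePair primrec_codeComp
  primrec_codePrec Code.primrec_rfind'

/-- A predicate is `Σ⁰₂` if it has the form `∃ s, ∀ t, R (a, s, t)` with `R` primitive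
recursive. The quantifiers range over `ℕ`. -/
def IsSigma2 {α : Type*} [Primcodable α] (P : α → Prop) : Prop :=
  ∃ R : α × ℕ × ℕ → Prop, PrimrecPred R ∧ ∀ a, P a ↔ ∃ s, ∀ t, R (a, s, t)

namespace IsSigma2

variable {α β : Type*} [Primcodable α] [Primcodable β] {P Q : α → Prop}

theorem of_iff (hP : IsSigma2 P) (h : ∀ a, Q a ↔ P a) : IsSigma2 Q := by
  rwa [funext fun a => propext (h a)]

theorem comp (hP : IsSigma2 P) {f : β → α} (hf : Primrec f) : IsSigma2 fun b => P (f b) := by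
  obtain ⟨R, hR, hPR⟩ := hP
  exact ⟨fun x => R (f x.1, x.2), hR.comp (by fun_prop), fun b => hPR (f b)⟩

theorem of_forall {R : α × ℕ → Prop} (hR : PrimrecPred R) : IsSigma2 fun a => ∀ t, R (a, t) :=
  ⟨fun x => R (x.1, x.2.2), hR.comp (by fun_prop), fun _ => (exists_const ℕ).symm⟩

theorem of_primrecPred (hP : PrimrecPred P) : IsSigma2 P :=
  (of_forall (hP.comp .fst)).of_iff fun _ => (forall_const ℕ).symm

theorem or (hP : IsSigma2 P) (hQ : IsSigma2 Q) : IsSigma2 fun a => P a ∨ Q a := by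
  obtain ⟨R, hR, hPR⟩ := hP
  obtain ⟨R', hR', hQR'⟩ := hQ
  refine ⟨fun x => R (x.1, x.2.1, x.2.2.unpair.1) ∨ R' (x.1, x.2.1, x.2.2.unpair.2),
    (hR.comp (by fun_prop)).or (hR'.comp (by fun_prop)), fun a => ?_⟩
  simp only [hPR, hQR', ← exists_or]
  refine exists_congr fun s => ⟨?_, fun h => ?_⟩
  · rintro (h | h) t
    exacts [.inl (h _), .inr (h _)]
  · by_contra! ⟨⟨t, ht⟩, t', ht'⟩
    simpa [ht, ht'] using h (Nat.pair t t')

theorem and (hP : IsSigma2 P) (hQ : IsSigma2 Q) : IsSigma2 fun a => P a ∧ Q a := by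
  obtain ⟨R, hR, hPR⟩ := hP
  obtain ⟨R', hR', hQR'⟩ := hQ
  refine ⟨fun x => R (x.1, x.2.1.unpair.1, x.2.2) ∧ R' (x.1, x.2.1.unpair.2, x.2.2),
    (hR.comp (by fun_prop)).and (hR'.comp (by fun_prop)), fun a => ?_⟩
  simp only [hPR, hQR']
  constructor
  · rintro ⟨⟨s, hs⟩, s', hs'⟩
    exact ⟨Nat.pair s s', fun t => by simpa using ⟨hs t, hs' t⟩⟩
  · rintro ⟨s, hs⟩
    exact ⟨⟨_, fun t => (hs t).1⟩, _, fun t => (hs t).2⟩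

theorem exists_ {P : α × β → Prop} [Inhabited β] (hP : IsSigma2 P) :
    IsSigma2 fun a => ∃ b, P (a, b) := by
  obtain ⟨R, hR, hPR⟩ := hP
  refine ⟨fun x => R ((x.1, (Encodable.decode x.2.1.unpair.1).getD default), x.2.1.unpair.2, x.2.2),
    hR.comp (by fun_prop), fun a => ?_⟩
  simp only [hPR]
  constructor
  · rintro ⟨b, s, h⟩
    exact ⟨Nat.pair (Encodable.encode b) s, fun t => by simpa using h t⟩
  · rintro ⟨s, h⟩
    exact ⟨_, _, h⟩

theorem forall_lt {P : α × ℕ → Prop} (hP : IsSigma2 P) {f : α → ℕ} (hf : Primrec f) :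
    IsSigma2 fun a => ∀ i < f a, P (a, i) := by
  obtain ⟨R, hR, hPR⟩ := hP
  have hwitnesses : IsSigma2 fun x : α × List ℕ =>
      ∀ t, ∀ i < f x.1, R ((x.1, i), x.2.getD i 0, t) :=
    of_forall (primrecPred_forall_lt (R := fun y : ((α × List ℕ) × ℕ) × ℕ =>
      R ((y.1.1.1, y.2), y.1.1.2.getD y.2 0, y.1.2)) (f := fun y => f y.1.1)
      (hR.comp (by fun_prop)) (by fun_prop))
  refine hwitnesses.exists_.of_iff fun a => ?_
  simp only [hPR]
  constructor
  · intro h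
    choose! s hs using h
    refine ⟨(List.range (f a)).map s, fun t i hi => ?_⟩
    simpa [List.getD, hi] using hs i hi t
  · rintro ⟨l, hl⟩ i hi
    exact ⟨_, fun t => hl t i hi⟩

end IsSigma2

namespace CodeO

/-- The oracle code with a given number, inverse to `CodeO.encode`. -/
def ofNat : ℕ → CodeO
  | 0 => zero
  | 1 => succ
  | 2 => left
  | 3 => right
  | 4 => oracle
  | n + 5 =>
    have : n / 4 < n + 5 := by omega
    have : (n / 4).unpair.1 < n + 5 := (Nat.unpair_left_le _).trans_lt this
    have : (n / 4).unpair.2 < n + 5 := (Nat.unpair_right_le _).trans_lt ‹n / 4 < n + 5›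
    match n % 4 with
    | 0 => pair (ofNat (n / 4).unpair.1) (ofNat (n / 4).unpair.2)
    | 1 => prec (ofNat (n / 4).unpair.1) (ofNat (n / 4).unpair.2)
    | 2 => comp (ofNat (n / 4).unpair.1) (ofNat (n / 4).unpair.2)
    | _ => rfind' (ofNat (n / 4))

theorem encode_ofNat (n : ℕ) : (ofNat n).encode = n := by
  induction n using ofNat.induct with
  | case1 | case2 | case3 | case4 | case5 => simp only [ofNat, encode]
  | case6 n _ _ _ h ihl ihr | case7 n _ _ _ h ihl ihr | case8 n _ _ _ h ihl ihr =>
    simp only [ofNat, h, encode, ihl, ihr, Nat.pair_unpair]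
    omega
  | case9 n _ _ _ h₀ h₁ h₂ ih =>
    have h₃ : n % 4 = 3 := by grind
    simp only [ofNat, h₃, encode, ih]
    omega

theorem ofNat_encode (c : CodeO) : ofNat c.encode = c := by
  induction c with
  | zero | succ | left | right | oracle => simp only [encode, ofNat]
  | pair c d hc hd | comp c d hc hd | prec c d hc hd =>
    simp [encode, ofNat, mul_add, ← mul_assoc, Nat.mul_add_div, hc, hd]
  | rfind' c hc =>
    simp [encode, ofNat, mul_add, ← mul_assoc, Nat.mul_add_div, hc]

/-- The ordinary code obtained by hard-wiring the zero oracle. -/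
def toCode : CodeO → Code
  | zero => .zero
  | succ => .succ
  | left => .left
  | right => .right
  | oracle => .zero
  | pair c d => .pair c.toCode d.toCode
  | comp c d => .comp c.toCode d.toCode
  | prec c d => .prec c.toCode d.toCode
  | rfind' c => .rfind' c.toCode

theorem eval_toCode (c : CodeO) : c.toCode.eval = c.eval fun _ => 0 := by
  induction c with
  | zero | succ | left | right | oracle => rfl
  | pair c d hc hd | comp c d hc hd | prec c d hc hd =>
    simp only [toCode, eval, Code.eval, hc, hd]
    rfl
  | rfind' c hc =>
    simp only [toCode, eval, Code.eval, hc]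
    rfl

/-- The course-of-values step computing `(ofNat n).toCode` from the list of its values below
`n = L.length`. -/
def toCodeStep (L : List Code) : Code :=
  let k := (L.length - 5) / 4
  let c := L.getD k.unpair.1 .zero
  let d := L.getD k.unpair.2 .zero
  [.zero, .succ, .left, .right, .zero].getD L.length
    ([.pair c d, .prec c d, .comp c d].getD ((L.length - 5) % 4) (.rfind' (L.getD k .zero)))

theorem toCodeStep_map_range (n : ℕ) :
    toCodeStep ((List.range n).map fun m => (ofNat m).toCode) = (ofNat n).toCode := by
  match n with
  | 0 | 1 | 2 | 3 | 4 => simp [toCodeStep, ofNat, toCode]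
  | n + 5 =>
    have hk : n / 4 < n + 5 := by omega
    have hl : (n / 4).unpair.1 < n + 5 := (Nat.unpair_left_le _).trans_lt hk
    have hr : (n / 4).unpair.2 < n + 5 := (Nat.unpair_right_le _).trans_lt hk
    have hn : n % 4 < 4 := Nat.mod_lt n four_pos
    rw [ofNat]
    interval_cases h : n % 4 <;> simp [toCodeStep, toCode, h, hk, hl, hr, -List.map_append]

theorem primrec_toCode_ofNat : Primrec fun n => (ofNat n).toCode := by
  have hstep : Primrec toCodeStep := by unfold toCodeStep; fun_prop
  have hrec : Primrec₂ fun (_ : Unit) n => (ofNat n).toCode :=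
    Primrec.nat_strong_rec _ (g := fun _ L => some (toCodeStep L))
      (Primrec.option_some.comp (hstep.comp .snd)) fun _ n => by rw [toCodeStep_map_range]
  exact hrec.comp (.const ()) .id

end CodeO

theorem code_eval_dom_iff (c : Code) (n : ℕ) : (c.eval n).Dom ↔ ∃ k, (c.evaln k n).isSome := by
  simp only [Part.dom_iff_mem, Code.evaln_complete, Option.isSome_iff_exists, Option.mem_def]
  exact exists_comm

theorem primrecPred_evaln_isSome : PrimrecPred fun x : ℕ × ℕ =>
    (Code.evaln x.2 (CodeO.ofNat x.1).toCode x.1).isSome = true := by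
  have hargs : Primrec fun x : ℕ × ℕ => ((x.2, (CodeO.ofNat x.1).toCode), x.1) :=
    .pair (.pair .snd (CodeO.primrec_toCode_ofNat.comp .fst)) .fst
  exact primrecPred_eq (Primrec.option_isSome.comp (Code.primrec_evaln.comp hargs)) (.const true)

theorem iterJump_one_apply (e : ℕ) : iterJump 1 e =
    if ∃ k, (Code.evaln k (CodeO.ofNat e).toCode e).isSome then 1 else 0 := by
  have hhalt : (∃ c : CodeO, c.encode = e ∧ (c.eval (fun _ => 0) e).Dom) ↔
      ∃ k, (Code.evaln k (CodeO.ofNat e).toCode e).isSome := by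
    rw [← code_eval_dom_iff, CodeO.eval_toCode]
    refine ⟨?_, fun h => ⟨_, CodeO.encode_ofNat e, h⟩⟩
    rintro ⟨c, rfl, h⟩
    rwa [CodeO.ofNat_encode]
  exact if_congr hhalt rfl rfl

theorem isSigma2_iterJump_one : IsSigma2 fun x : ℕ × ℕ => iterJump 1 x.1 = x.2 := by
  have hhalt : IsSigma2 fun x : ℕ × ℕ =>
      ∃ k, (Code.evaln k (CodeO.ofNat x.1).toCode x.1).isSome = true :=
    (IsSigma2.of_primrecPred (P := fun y : (ℕ × ℕ) × ℕ =>
      (Code.evaln y.2 (CodeO.ofNat y.1.1).toCode y.1.1).isSome = true)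
      (primrecPred_evaln_isSome.comp (f := fun y : (ℕ × ℕ) × ℕ => (y.1.1, y.2))
        (by fun_prop))).exists_
  have hloop : IsSigma2 fun x : ℕ × ℕ =>
      ∀ k, ¬ (Code.evaln k (CodeO.ofNat x.1).toCode x.1).isSome = true :=
    .of_forall (primrecPred_evaln_isSome.comp (f := fun y : (ℕ × ℕ) × ℕ => (y.1.1, y.2))
      (by fun_prop)).not
  have hval (v : ℕ) : IsSigma2 fun x : ℕ × ℕ => v = x.2 :=
    .of_primrecPred (primrecPred_eq (by fun_prop) (by fun_prop))
  refine ((hhalt.and (hval 1)).or (hloop.and (hval 0))).of_iff fun x => ?_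
  rw [iterJump_one_apply, ← not_exists]
  split_ifs with h <;> simp [h]

theorem mem_natRec_iff {α : Type*} {p : Part α} {g : ℕ → α → Part α} {n : ℕ} {v : α} :
    v ∈ (n.rec p fun y ih => ih >>= g y : Part α) ↔
      ∃ f : ℕ → α, f 0 ∈ p ∧ (∀ i < n, f (i + 1) ∈ g i (f i)) ∧ f n = v := by
  constructor
  · induction n generalizing v with
    | zero => exact fun h => ⟨fun _ => v, h, by simp, rfl⟩
    | succ n ih =>
      intro h
      obtain ⟨w, hw, hv⟩ := Part.mem_bind_iff.1 h
      obtain ⟨f, hzero, hsucc, rfl⟩ := ih hw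
      refine ⟨Function.update f (n + 1) v, by simpa, fun i hi => ?_, by simp⟩
      rw [Function.update_of_ne (by omega : i ≠ n + 1)]
      obtain rfl | hi := Nat.lt_succ_iff_lt_or_eq.1 hi |>.symm
      · rwa [Function.update_self]
      · rw [Function.update_of_ne (by omega)]
        exact hsucc i hi
  · rintro ⟨f, hzero, hsucc, rfl⟩
    induction n with
    | zero => exact hzero
    | succ n ih =>
      exact Part.mem_bind_iff.2 ⟨f n, ih fun i hi => hsucc i (hi.trans n.lt_succ_self),
        hsucc n n.lt_succ_self⟩

namespace CodeO

variable {O : ℕ → ℕ} {c d : CodeO} {n v : ℕ}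

theorem mem_eval_pair : v ∈ (pair c d).eval O n ↔
    v.unpair.1 ∈ c.eval O n ∧ v.unpair.2 ∈ d.eval O n := by
  simp only [eval, Seq.seq, Part.map_eq_map, Part.bind_map, Part.mem_bind_iff, Part.mem_map_iff]
  constructor
  · rintro ⟨x, hx, y, hy, rfl⟩
    simpa using ⟨hx, hy⟩
  · rintro ⟨hx, hy⟩
    exact ⟨_, hx, _, hy, Nat.pair_unpair v⟩

theorem mem_eval_comp : v ∈ (comp c d).eval O n ↔ ∃ w, w ∈ d.eval O n ∧ v ∈ c.eval O w :=
  Part.mem_bind_iff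

theorem mem_eval_prec : v ∈ (prec c d).eval O n ↔ ∃ l : List ℕ,
    l.getD 0 0 ∈ c.eval O n.unpair.1 ∧
    (∀ i < n.unpair.2,
      l.getD (i + 1) 0 ∈ d.eval O (Nat.pair n.unpair.1 (Nat.pair i (l.getD i 0)))) ∧
    l.getD n.unpair.2 0 = v := by
  refine mem_natRec_iff.trans ⟨?_, fun ⟨l, hl⟩ => ⟨fun i => l.getD i 0, hl⟩⟩
  rintro ⟨f, hzero, hsucc, hv⟩
  have hget : ∀ i ≤ n.unpair.2, ((List.range (n.unpair.2 + 1)).map f).getD i 0 = f i :=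
    fun i hi => by simp [List.getD, Nat.lt_succ_of_le hi, -List.map_append]
  refine ⟨(List.range (n.unpair.2 + 1)).map f, ?_, fun i hi => ?_, ?_⟩
  · rwa [hget 0 (Nat.zero_le _)]
  · rw [hget i hi.le, hget (i + 1) hi]
    exact hsucc i hi
  · rwa [hget _ le_rfl]

theorem mem_eval_rfind' : v ∈ (rfind' c).eval O n ↔ ∃ k,
    0 ∈ c.eval O (Nat.pair n.unpair.1 (k + n.unpair.2)) ∧
    (∀ i < k, ∃ w, w + 1 ∈ c.eval O (Nat.pair n.unpair.1 (i + n.unpair.2))) ∧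
    k + n.unpair.2 = v := by
  simp only [eval, Nat.unpaired, Part.mem_map_iff, Part.map_eq_map]
  refine exists_congr fun k => Iff.trans (and_congr_left' ?_) and_assoc
  refine Nat.mem_rfind.trans (and_congr ?_ (forall₂_congr fun i _ => ?_)) <;>
    simp only [Part.mem_map_iff, decide_eq_true_eq, decide_eq_false_iff_not]
  · simp only [exists_eq_right]
  · exact ⟨fun ⟨w, hw, hne⟩ => ⟨w - 1, by rwa [Nat.sub_one_add_one hne]⟩,
      fun ⟨w, hw⟩ => ⟨w + 1, hw, w.succ_ne_zero⟩⟩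

end CodeO

section Relativization

variable {O : ℕ → ℕ}

theorem isSigma2_graph_prec {c d : CodeO} (hc : IsSigma2 fun x : ℕ × ℕ => x.2 ∈ c.eval O x.1)
    (hd : IsSigma2 fun x : ℕ × ℕ => x.2 ∈ d.eval O x.1) :
    IsSigma2 fun x : ℕ × ℕ => x.2 ∈ (CodeO.prec c d).eval O x.1 := by
  have hzero := hc.comp
    (f := fun y : (ℕ × ℕ) × List ℕ => (y.1.1.unpair.1, y.2.getD 0 0)) (by fun_prop)
  have hsucc := (hd.comp (f := fun z : ((ℕ × ℕ) × List ℕ) × ℕ =>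
    (Nat.pair z.1.1.1.unpair.1 (Nat.pair z.2 (z.1.2.getD z.2 0)), z.1.2.getD (z.2 + 1) 0))
    (by fun_prop)).forall_lt (f := fun y => y.1.1.unpair.2) (by fun_prop)
  have hvalue : IsSigma2 fun y : (ℕ × ℕ) × List ℕ => y.2.getD y.1.1.unpair.2 0 = y.1.2 :=
    .of_primrecPred (primrecPred_eq (by fun_prop) (by fun_prop))
  exact (hzero.and (hsucc.and hvalue)).exists_.of_iff fun _ => CodeO.mem_eval_prec

theorem isSigma2_graph_rfind' {c : CodeO} (hc : IsSigma2 fun x : ℕ × ℕ => x.2 ∈ c.eval O x.1) :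
    IsSigma2 fun x : ℕ × ℕ => x.2 ∈ (CodeO.rfind' c).eval O x.1 := by
  have hroot := hc.comp (f := fun y : (ℕ × ℕ) × ℕ =>
    (Nat.pair y.1.1.unpair.1 (y.2 + y.1.1.unpair.2), 0)) (by fun_prop)
  have hleast := (hc.comp (f := fun z : (((ℕ × ℕ) × ℕ) × ℕ) × ℕ =>
    (Nat.pair z.1.1.1.1.unpair.1 (z.1.2 + z.1.1.1.1.unpair.2), z.2 + 1))
    (by fun_prop)).exists_.forall_lt (f := fun y => y.2) (by fun_prop)
  have hvalue : IsSigma2 fun y : (ℕ × ℕ) × ℕ => y.2 + y.1.1.unpair.2 = y.1.2 :=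
    .of_primrecPred (primrecPred_eq (by fun_prop) (by fun_prop))
  exact (hroot.and (hleast.and hvalue)).exists_.of_iff fun _ => CodeO.mem_eval_rfind'

theorem isSigma2_graph_eval (hO : IsSigma2 fun x : ℕ × ℕ => O x.1 = x.2) (c : CodeO) :
    IsSigma2 fun x : ℕ × ℕ => x.2 ∈ c.eval O x.1 := by
  have hprim {f : ℕ → ℕ} (hf : Primrec f) : IsSigma2 fun x : ℕ × ℕ => x.2 ∈ Part.some (f x.1) :=
    .of_iff (.of_primrecPred (primrecPred_eq .snd (hf.comp .fst))) fun _ => Part.mem_some_iff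
  induction c with
  | zero => exact hprim (.const 0)
  | succ => exact hprim .succ
  | left => exact hprim (Primrec.fst.comp .unpair)
  | right => exact hprim (Primrec.snd.comp .unpair)
  | oracle => exact hO.of_iff fun _ => Part.mem_some_iff.trans eq_comm
  | pair c d hc hd =>
    exact ((hc.comp (f := fun x => (x.1, x.2.unpair.1)) (by fun_prop)).and
      (hd.comp (f := fun x => (x.1, x.2.unpair.2)) (by fun_prop))).of_iff
      fun _ => CodeO.mem_eval_pair
  | comp c d hc hd =>
    exact ((hd.comp (f := fun y : (ℕ × ℕ) × ℕ => (y.1.1, y.2)) (by fun_prop)).and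
      (hc.comp (f := fun y : (ℕ × ℕ) × ℕ => (y.2, y.1.2)) (by fun_prop))).exists_.of_iff
      fun _ => CodeO.mem_eval_comp
  | prec c d hc hd => exact isSigma2_graph_prec hc hd
  | rfind' c hc => exact isSigma2_graph_rfind' hc

theorem CeIn.isSigma2 (hO : IsSigma2 fun x : ℕ × ℕ => O x.1 = x.2) {S : Set ℕ} (hS : CeIn O S) :
    IsSigma2 (· ∈ S) := by
  obtain ⟨c, rfl⟩ := hS
  exact (isSigma2_graph_eval hO c).exists_.of_iff fun _ => Part.dom_iff_mem

end Relativization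

/-- A functional `F` is oracle computable if a single oracle code computes `n ↦ F O n` for every
oracle `O`, as a total function. -/
def OracleComputable (F : (ℕ → ℕ) → ℕ → ℕ) : Prop :=
  ∃ c : CodeO, ∀ O n, c.eval O n = Part.some (F O n)

namespace OracleComputable

variable {F G : (ℕ → ℕ) → ℕ → ℕ}

theorem oracle : OracleComputable fun O n => O n :=
  ⟨.oracle, fun _ _ => rfl⟩

theorem pair (hF : OracleComputable F) (hG : OracleComputable G) :
    OracleComputable fun O n => Nat.pair (F O n) (G O n) := by
  obtain ⟨c, hc⟩ := hF
  obtain ⟨d, hd⟩ := hG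
  exact ⟨.pair c d, fun O n => by simp [CodeO.eval, hc, hd, Seq.seq]⟩

theorem comp (hF : OracleComputable F) (hG : OracleComputable G) :
    OracleComputable fun O n => F O (G O n) := by
  obtain ⟨c, hc⟩ := hF
  obtain ⟨d, hd⟩ := hG
  exact ⟨.comp c d, fun O n =>
    (congrArg (· >>= c.eval O) (hd O n)).trans ((Part.bind_some _ _).trans (hc O _))⟩

theorem prec (hF : OracleComputable F) (hG : OracleComputable G) :
    OracleComputable fun O => Nat.unpaired fun a n =>
      n.rec (F O a) fun y ih => G O (Nat.pair a (Nat.pair y ih)) := by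
  obtain ⟨c, hc⟩ := hF
  obtain ⟨d, hd⟩ := hG
  refine ⟨.prec c d, fun O x => ?_⟩
  simp only [CodeO.eval, Nat.unpaired, hc, hd]
  induction x.unpair.2 with
  | zero => rfl
  | succ n ih => exact (congrArg (· >>= _) ih).trans (Part.bind_some _ _)

theorem of_natPrimrec {f : ℕ → ℕ} (hf : Nat.Primrec f) : OracleComputable fun _ => f := by
  induction hf with
  | zero => exact ⟨.zero, fun _ _ => rfl⟩
  | succ => exact ⟨.succ, fun _ _ => rfl⟩
  | left => exact ⟨.left, fun _ _ => rfl⟩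
  | right => exact ⟨.right, fun _ _ => rfl⟩
  | pair _ _ hf hg => exact hf.pair hg
  | comp _ _ hf hg => exact hf.comp hg
  | prec _ _ hf hg => exact hf.prec hg

theorem of_primrec {f : ℕ → ℕ} (hf : Primrec f) : OracleComputable fun _ => f :=
  of_natPrimrec (Primrec.nat_iff.1 hf)

theorem encode_map_range :
    OracleComputable fun O n => Encodable.encode ((List.range n).map O) := by
  have happend : Primrec fun x : ℕ => Encodable.encode
      (((Encodable.decode x.unpair.1).getD [] : List ℕ) ++ [x.unpair.2]) :=
    Primrec.encode.comp (Primrec.list_append.comp (by fun_prop) (by fun_prop))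
  have hstep := (of_primrec happend).comp
    ((of_primrec (f := fun x => x.unpair.2.unpair.2) (by fun_prop)).pair
      (oracle.comp (of_primrec (f := fun x => x.unpair.2.unpair.1) (by fun_prop))))
  have hrec := ((of_primrec (.const (Encodable.encode ([] : List ℕ)))).prec hstep).comp
    (of_primrec (f := fun n => Nat.pair 0 n) (by fun_prop))
  convert hrec using 3 with O n
  simp only [Nat.unpaired, Nat.unpair_pair]
  induction n with
  | zero => rfl
  | succ n ih =>
    simp only [← ih, Encodable.encodek, Option.getD_some, List.range_succ, List.map_append,
      List.map_singleton]

end OracleComputable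

theorem exists_code_dom_iff {R : ℕ × List ℕ → Prop} (hR : PrimrecPred R) :
    ∃ c : CodeO, ∀ O n, (c.eval O n).Dom ↔ ∃ t, R (n, (List.range t).map O) := by
  have htest : Primrec fun x : ℕ => if R (x.unpair.1, (Encodable.decode x.unpair.2).getD [])
      then 0 else 1 :=
    .ite (hR.comp (by fun_prop)) (.const 0) (.const 1)
  obtain ⟨c, hc⟩ := (OracleComputable.of_primrec htest).comp
    ((OracleComputable.of_primrec (f := fun x => x.unpair.1) (by fun_prop)).pair
      (OracleComputable.encode_map_range.comp
        (.of_primrec (f := fun x => x.unpair.2) (by fun_prop))))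
  obtain ⟨d, hd⟩ := OracleComputable.of_primrec (f := fun n => Nat.pair n 0) (by fun_prop)
  refine ⟨.comp (.rfind' c) d, fun O n => ?_⟩
  have heval : (CodeO.comp (.rfind' c) d).eval O n =
      Nat.rfind fun t => Part.some (decide (R (n, (List.range t).map O))) := by
    simp [CodeO.eval, hd, hc, Part.map_id']
  rw [heval]
  exact Nat.rfind_dom.trans (by simp)

theorem initSeg_length (X : Cantor) (n : ℕ) : (initSeg X n).length = n := by
  simp [initSeg]

theorem initSeg_take (X : Cantor) {m n : ℕ} (h : m ≤ n) : (initSeg X n).take m = initSeg X m := by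
  simp [initSeg, ← List.map_take, List.take_range, h]

theorem map_oX_range (X : Cantor) (t : ℕ) :
    ((List.range t).map (oX X)).map (fun v => decide (v = 1)) = initSeg X t := by
  simp only [initSeg, List.map_map]
  refine List.map_congr_left fun i _ => ?_
  cases h : X i <;> simp [oX, h]

theorem exists_machine_dom_iff_exists {R : ℕ × List Bool → Prop} (hR : PrimrecPred R) :
    ∃ M : CodeO, ∀ X n, (evalO X M n).Dom ↔ ∃ t, R (n, initSeg X t) := by
  have hbits : Primrec fun τ : List ℕ => τ.map fun v => decide (v = 1) :=
    Primrec.list_map .id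
      (primrecPred_eq (f := fun x : List ℕ × ℕ => x.2) .snd (.const 1)).decide.to₂
  obtain ⟨M, hM⟩ := exists_code_dom_iff
    (hR.comp (f := fun x : ℕ × List ℕ => (x.1, x.2.map fun v => decide (v = 1)))
      (Primrec.pair .fst (hbits.comp .snd)))
  exact ⟨M, fun X n => (hM (oX X) n).trans (by simp only [map_oX_range])⟩

theorem exists_machine_dom_iff_forall_lt {R : List Bool × ℕ × ℕ → Prop} (hR : PrimrecPred R)
    (N : ℕ) :
    ∃ M : CodeO, ∀ X n, (evalO X M n).Dom ↔
      ∀ j < n + N, ∃ t, R (initSeg X j.unpair.1, j.unpair.2, t) := by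
  have hcheck : PrimrecPred fun x : ℕ × List Bool => x.1 + N ≤ x.2.length ∧
      ∀ j < x.1 + N, ∃ t < x.2.length, R (x.2.take j.unpair.1, j.unpair.2, t) := by
    have hinner := primrecPred_exists_lt
      (R := fun z : ((ℕ × List Bool) × ℕ) × ℕ =>
        R (z.1.1.2.take z.1.2.unpair.1, z.1.2.unpair.2, z.2))
      (f := fun y => y.1.2.length) (hR.comp (by fun_prop)) (by fun_prop)
    exact (Primrec.nat_le.comp (by fun_prop) (by fun_prop)).and
      (primrecPred_forall_lt hinner (f := fun x => x.1 + N) (by fun_prop))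
  obtain ⟨M, hM⟩ := exists_machine_dom_iff_exists hcheck
  refine ⟨M, fun X n => (hM X n).trans ?_⟩
  simp only [initSeg_length]
  have htake {t j : ℕ} (ht : n + N ≤ t) (hj : j < n + N) :
      (initSeg X t).take j.unpair.1 = initSeg X j.unpair.1 :=
    initSeg_take X ((Nat.unpair_left_le j).trans (hj.le.trans ht))
  constructor
  · rintro ⟨t, ht, h⟩ j hj
    obtain ⟨s, -, hs⟩ := h j hj
    exact ⟨s, htake ht hj ▸ hs⟩
  · intro h
    have hbound : ∀ᶠ t in Filter.atTop, ∀ j < n + N,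
        ∃ s < t, R (initSeg X j.unpair.1, j.unpair.2, s) :=
      (Filter.eventually_all_finite (Set.finite_lt_nat _)).2 fun j hj =>
        (h j hj).elim fun s hs => (Filter.eventually_gt_atTop s).mono fun t hst => ⟨s, hst, hs⟩
    obtain ⟨t, ht, hnt⟩ := (hbound.and (Filter.eventually_ge_atTop (n + N))).exists
    exact ⟨t, hnt, fun j hj => by simpa only [htake hnt hj] using ht j hj⟩

theorem exists_machine_tot_inf_eq_compl_cyl {P : List Bool → Prop} (hP : IsSigma2 P)
    {ρ : List Bool} (hρ : P ρ) :
    ∃ M : CodeO, (∀ X, Extends X ρ → ∀ n, ¬ (evalO X M n).Dom) ∧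
      TOT M = (cyl {σ | P σ})ᶜ ∧ INF M = (cyl {σ | P σ})ᶜ := by
  obtain ⟨R, hR, hPR⟩ := hP
  obtain ⟨s₀, hs₀⟩ := (hPR ρ).1 hρ
  -- This bound makes every input check the pair `(|ρ|, s₀)`, which no oracle extending `ρ` passes.
  obtain ⟨M, hM⟩ := exists_machine_dom_iff_forall_lt hR.not (Nat.pair ρ.length s₀ + 1)
  have htot : TOT M = (cyl {σ | P σ})ᶜ := by
    ext X
    simp only [TOT, cyl, Set.mem_ofPred_eq, Set.mem_compl_iff, not_exists, hPR, not_forall, hM]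
    exact ⟨fun h k s => by simpa using h (Nat.pair k s) (Nat.pair k s) (by omega),
      fun h _ _ _ => h _ _⟩
  have hinf : INF M = TOT M := by
    ext X
    refine ⟨fun hX n => ?_, fun hX => ?_⟩
    · obtain ⟨m, hm, hnm⟩ := Set.Infinite.exists_gt hX n
      exact (hM X n).2 fun j hj => (hM X m).1 hm j (by omega)
    · have huniv : domSet M X = Set.univ := Set.eq_univ_of_forall hX
      exact (Set.infinite_univ.mono huniv.ge : (domSet M X).Infinite)
  refine ⟨M, fun X hX n hn => ?_, htot, hinf.trans htot⟩
  obtain ⟨t, ht⟩ := (hM X n).1 hn (Nat.pair ρ.length s₀) (by omega)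
  simp only [Nat.unpair_pair] at ht
  exact ht (by rw [show initSeg X ρ.length = ρ from hX]; exact hs₀ t)

/-- The natural number with binary expansion `σ`, most significant bit first. -/
def binNum (σ : List Bool) : ℕ :=
  σ.foldl (fun v b => 2 * v + b.toNat) 0

/-- The dyadic rational `0.σ` in `[0, 1)`. -/
noncomputable def dyadicVal (σ : List Bool) : ℝ :=
  binNum σ / 2 ^ σ.length

theorem binNum_initSeg_succ (X : Cantor) (k : ℕ) :
    binNum (initSeg X (k + 1)) = 2 * binNum (initSeg X k) + (X k).toNat := by
  simp [binNum, initSeg, List.range_succ]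

theorem binNum_replicate_true (c : ℕ) : binNum (List.replicate c true) + 1 = 2 ^ c := by
  induction c with
  | zero => rfl
  | succ c ih =>
    rw [List.replicate_succ', binNum, List.foldl_append, ← binNum, pow_succ', ← ih]
    simp only [List.foldl_cons, List.foldl_nil, Bool.toNat_true]
    ring

theorem dyadicVal_replicate_true (c : ℕ) :
    dyadicVal (List.replicate c true) = 1 - (2 : ℝ)⁻¹ ^ c := by
  have h : (binNum (List.replicate c true) : ℝ) = 2 ^ c - 1 :=
    eq_sub_of_add_eq (mod_cast binNum_replicate_true c)
  rw [dyadicVal, List.length_replicate, h, inv_pow]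
  field_simp

theorem primrec_binNum : Primrec binNum := by
  have hstep : Primrec fun x : List Bool × ℕ × Bool => 2 * x.2.1 + x.2.2.toNat :=
    primrec_natAdd (by fun_prop) ((Primrec.dom_finite Bool.toNat).comp (by fun_prop))
  exact Primrec.list_foldl .id (.const 0) hstep.to₂

attribute [local fun_prop] primrec_binNum

theorem encode_rat_of_nonneg {q : ℚ} (hq : 0 ≤ q) :
    Encodable.encode q = Nat.pair (2 * q.num.natAbs) q.den := by
  have hencode : Encodable.encode q = Nat.pair (Encodable.encode q.num) q.den := rfl
  rw [hencode]
  lift q.num to ℕ using Rat.num_nonneg.2 hq with n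
  rfl

theorem rat_le_natCast_div_iff {q : ℚ} (hq : 0 ≤ q) (v : ℕ) {d : ℕ} (hd : 0 < d) :
    (q : ℝ) ≤ v / d ↔ q.num.natAbs * d ≤ v * q.den := by
  have hnum : (q.num.natAbs : ℝ) = q.num := by
    rw [← Int.cast_natCast, Int.natAbs_of_nonneg (Rat.num_nonneg.2 hq)]
  rw [Rat.cast_def, div_le_div_iff₀ (mod_cast q.den_pos) (mod_cast hd), ← hnum]
  norm_cast

theorem lt_natCast_div_iff_exists_mem_cut {α : ℝ} (h0 : 0 ≤ α) (v : ℕ) {d : ℕ} (hd : 0 < d) :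
    α < v / d ↔ ∃ m ∈ {m | ∃ q : ℚ, Encodable.encode q = m ∧ α < q},
      m.unpair.1 / 2 * d ≤ v * m.unpair.2 := by
  constructor
  · intro h
    have hcast : (((v / d : ℚ)) : ℝ) = v / d := by push_cast; rfl
    have hq : (0 : ℚ) ≤ v / d := by positivity
    refine ⟨_, ⟨v / d, rfl, hcast ▸ h⟩, ?_⟩
    simpa [encode_rat_of_nonneg hq] using (rat_le_natCast_div_iff hq v hd).1 hcast.le
  · rintro ⟨_, ⟨q, rfl, hαq⟩, hle⟩
    have hq : 0 ≤ q := mod_cast h0.trans hαq.le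
    refine hαq.trans_le ((rat_le_natCast_div_iff hq v hd).2 ?_)
    simpa [encode_rat_of_nonneg hq] using hle

theorem RightCeIn.isSigma2_lt_dyadicVal {O : ℕ → ℕ} (hO : IsSigma2 fun x : ℕ × ℕ => O x.1 = x.2)
    {α : ℝ} (h0 : 0 ≤ α) (hα : RightCeIn O α) : IsSigma2 fun σ => α < dyadicVal σ := by
  have hle : PrimrecPred fun x : List Bool × ℕ =>
      x.2.unpair.1 / 2 * 2 ^ x.1.length ≤ binNum x.1 * x.2.unpair.2 :=
    Primrec.nat_le.comp (by fun_prop) (by fun_prop)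
  have hcut := (CeIn.isSigma2 hO hα).comp (f := fun x : List Bool × ℕ => x.2) (by fun_prop)
  refine (hcut.and (.of_primrecPred hle)).exists_.of_iff fun σ => ?_
  simpa [dyadicVal] using
    lt_natCast_div_iff_exists_mem_cut h0 (binNum σ) (d := 2 ^ σ.length) (by positivity)

theorem binNum_initSeg_digits {x : ℝ} (hx : x ∈ Set.Ico 0 1) (k : ℕ) :
    (binNum (initSeg (digits x) k) : ℤ) = ⌊x * 2 ^ k⌋ := by
  induction k with
  | zero => simpa [binNum, initSeg, eq_comm, Int.floor_eq_zero_iff] using hx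
  | succ k ih =>
    have hhalf : ⌊x * 2 ^ (k + 1)⌋ / 2 = ⌊x * 2 ^ k⌋ := by
      simpa [pow_succ, mul_assoc] using
        Int.mul_natCast_floor_div_cancel two_ne_zero (x * 2 ^ k)
    have hbit : ((digits x k).toNat : ℤ) = ⌊x * 2 ^ (k + 1)⌋ % 2 := by
      rcases Int.emod_two_eq_zero_or_one ⌊x * 2 ^ (k + 1)⌋ with h | h <;> simp [digits, h]
    rw [binNum_initSeg_succ]
    push_cast
    rw [ih, hbit, ← hhalf, Int.mul_ediv_add_emod]

theorem dyadicVal_initSeg_digits {x : ℝ} (hx : x ∈ Set.Ico 0 1) (k : ℕ) :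
    dyadicVal (initSeg (digits x) k) = ⌊x * 2 ^ k⌋ / 2 ^ k := by
  rw [dyadicVal, initSeg_length, ← binNum_initSeg_digits hx, Int.cast_natCast]

theorem lt_iff_exists_lt_dyadicVal_initSeg_digits {α x : ℝ} (hx : x ∈ Set.Ico 0 1) :
    α < x ↔ ∃ k, α < dyadicVal (initSeg (digits x) k) := by
  simp only [dyadicVal_initSeg_digits hx]
  constructor
  · intro h
    obtain ⟨k, hk⟩ := exists_pow_lt_of_lt_one (sub_pos.2 h) (by norm_num : (2 : ℝ)⁻¹ < 1)
    refine ⟨k, ?_⟩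
    rw [inv_pow, inv_lt_iff_one_lt_mul₀ (by positivity)] at hk
    rw [lt_div_iff₀ (by positivity)]
    linarith [Int.lt_floor_add_one (x * 2 ^ k)]
  · rintro ⟨k, hk⟩
    exact hk.trans_le ((div_le_iff₀ (by positivity)).2 (Int.floor_le _))

theorem preimage_digits_compl_cyl_inter_Ico {α : ℝ} (h1 : α < 1) :
    digits ⁻¹' (cyl {σ | α < dyadicVal σ})ᶜ ∩ Set.Ico 0 1 = Set.Icc 0 α := by
  ext x
  have hcyl (hx : x ∈ Set.Ico 0 1) : digits x ∈ cyl {σ | α < dyadicVal σ} ↔ α < x :=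
    (lt_iff_exists_lt_dyadicVal_initSeg_digits hx).symm
  constructor
  · rintro ⟨hmem, hx⟩
    exact ⟨hx.1, not_lt.1 fun h => hmem ((hcyl hx).2 h)⟩
  · rintro ⟨h0, hα⟩
    have hx : x ∈ Set.Ico (0 : ℝ) 1 := ⟨h0, hα.trans_lt h1⟩
    exact ⟨fun hmem => hα.not_gt ((hcyl hx).1 hmem), hx⟩

theorem measurable_digits : Measurable digits :=
  measurable_pi_iff.2 fun n =>
    (measurable_from_top (f := fun z : ℤ => decide (z % 2 = 1))).comp
      (Int.measurable_floor.comp (measurable_id.mul_const ((2 : ℝ) ^ (n + 1))))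

theorem measurableSet_preimage_initSeg (k : ℕ) (S : Set (List Bool)) :
    MeasurableSet ((initSeg · k) ⁻¹' S) := by
  have hrestrict : Measurable fun (X : Cantor) (i : Fin k) => X i :=
    measurable_pi_lambda _ fun i => measurable_pi_apply _
  convert hrestrict (Set.toFinite (List.ofFn ⁻¹' S)).measurableSet using 1
  ext X
  simp [initSeg, List.ofFn_eq_map, ← List.map_coe_finRange_eq_range, Function.comp_def]

theorem measurableSet_cyl (S : Set (List Bool)) : MeasurableSet (cyl S) := by
  have hcyl : cyl S = ⋃ n, (initSeg · n) ⁻¹' S := by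
    ext X
    simp [cyl]
  rw [hcyl]
  exact .iUnion fun n => measurableSet_preimage_initSeg n S

theorem muR_compl_cyl_lt_dyadicVal {α : ℝ} (h0 : 0 ≤ α) (h1 : α < 1) :
    muR (cyl {σ | α < dyadicVal σ})ᶜ = α := by
  have hmeas := (measurableSet_cyl {σ | α < dyadicVal σ}).compl
  rw [muR, mu, Measure.map_apply measurable_digits hmeas,
    Measure.restrict_apply (measurable_digits hmeas), preimage_digits_compl_cyl_inter_Ico h1,
    Real.volume_Icc, sub_zero, ENNReal.toReal_ofReal h0]

/-- **Oracle machines with prescribed totality and infinitude probability.**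
If `α ∈ (0,1)` is a `∅'`-right-c.e. real and `α + 2^{-c} < 1`, then there are an oracle
machine `M` and a string `ρ` of length `c` such that `M` diverges everywhere on every
oracle compatible with `ρ` (equivalently, on every oracle extending `ρ`), and
`μ(TOT(M)) = μ(INF(M)) = α`. -/
theorem prescribed_totality_probability (α : ℝ) (h0 : 0 < α) (h1 : α < 1)
    (hα : RightCeIn (iterJump 1) α) (c : ℕ) (hc : α + (2 : ℝ)⁻¹ ^ c < 1) :
    ∃ (M : CodeO) (ρ : List Bool), ρ.length = c ∧
      (∀ X : Cantor, Extends X ρ → ∀ n, ¬ (evalO X M n).Dom) ∧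
      muR (TOT M) = α ∧ muR (INF M) = α := by
  obtain ⟨M, hdiv, htot, hinf⟩ := exists_machine_tot_inf_eq_compl_cyl
    (hα.isSigma2_lt_dyadicVal isSigma2_iterJump_one h0.le)
    (ρ := List.replicate c true) (by rw [dyadicVal_replicate_true]; linarith)
  have hmeasure : muR (cyl {σ | α < dyadicVal σ})ᶜ = α := muR_compl_cyl_lt_dyadicVal h0.le h1
  exact ⟨M, List.replicate c true, List.length_replicate, hdiv, htot ▸ hmeasure, hinf ▸ hmeasure⟩

end RandProb
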